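/- Let p ∈ (1/2,1] and ρ ∈ C¹([0,1];(0,1)). There exists a constant C (depending only on p and ρ) such that for every integer N ≥ 1, every σ ∈ [0,N], and every probability density f : Ω_N → (0,∞) with respect to ν_ρ^N (the product measure with marginals ρ(i/N)), one has, with μ = f ν_ρ^N, ⟨√f, L_exc[√f]⟩_{ν_ρ^N} ≤ −((σ−1)/4) D_exc^N(μ; ν_ρ^N) + C. -/

import Mathlib

/-!
For a fixed bond let `s` be the swap, `g = √f`, `h = g ∘ s - g`, `M = Σ g² ν`, and suppose that
`|ν ∘ s - ν| ≤ κ ν`. Because `s` is an involution, the symmetric part satisfies the exact identity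
`Σ g h (ν + ν ∘ s) = -Σ h² ν`, so it differs from minus the bond's Dirichlet form `½ Σ h² ν` only
by `½ Σ g h (ν - ν ∘ s)`. Young's inequality absorbs this error into half of the Dirichlet form at
a cost of order `κ² M`. For a Lipschitz profile bounded away from `0` and `1` one has `κ = O(1/N)`,
hence the total cost over the `N` bonds, multiplied by `σ`, is `O(σ/N)`.

For the asymmetric part, `g h ≤ ½ (g² ∘ s - g²)` and the change of variables `s` leave
`½ Σ (c ∘ s - c) g² ν` up to `O(κ) M` per bond. Since `c ∘ s - c = (2p - 1)(η_{i+1} - η_i)`, the sum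
over bonds telescopes to a boundary term.
-/

open Finset

/-- The space of particle configurations on `{0,1,…,N}`. -/
abbrev Cfg (N : ℕ) := Fin (N + 1) → Bool

/-- The real value (`0` or `1`) of an occupation variable. -/
def ind (b : Bool) : ℝ := if b then 1 else 0

/-- The configuration obtained by swapping the values at sites `i` and `i+1`. -/
def swap {N : ℕ} (i : Fin N) (η : Cfg N) : Cfg N :=
  fun k => if k = i.castSucc then η i.succ else if k = i.succ then η i.castSucc else η k

/-- The exclusion jump rate `c_{i,i+1}(η) = p η_i(1−η_{i+1}) + (1−p) η_{i+1}(1−η_i)`. -/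
noncomputable def cExc (p : ℝ) {N : ℕ} (i : Fin N) (η : Cfg N) : ℝ :=
  p * ind (η i.castSucc) * (1 - ind (η i.succ)) +
    (1 - p) * ind (η i.succ) * (1 - ind (η i.castSucc))

/-- The exclusion generator
`L_exc g(η) = Σ_{i=0}^{N−1} (c_{i,i+1}(η) + σ/2)[g(η^{i,i+1}) − g(η)]`. -/
noncomputable def Lexc (p σ : ℝ) {N : ℕ} (g : Cfg N → ℝ) (η : Cfg N) : ℝ :=
  ∑ i : Fin N, (cExc p i η + σ / 2) * (g (swap i η) - g η)

/-- The product measure with marginals `ν_ρ^N(η_i = 1) = ρ(i/N)`. -/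
noncomputable def nuRho (ρ : ℝ → ℝ) (N : ℕ) (η : Cfg N) : ℝ :=
  ∏ i : Fin (N + 1), (if η i then ρ ((i.val : ℝ) / N) else 1 - ρ ((i.val : ℝ) / N))

/-- The exclusion Dirichlet form
`D_exc^N(μ;ν) = (1/2) Σ_η Σ_{i=0}^{N−1} (√(f(η^{i,i+1})) − √(f(η)))² ν(η)`,
where `f = dμ/dν`. -/
noncomputable def Dexc (N : ℕ) (f ν : Cfg N → ℝ) : ℝ :=
  (1 / 2) * ∑ η : Cfg N, ∑ i : Fin N,
    (Real.sqrt (f (swap i η)) - Real.sqrt (f η)) ^ 2 * ν η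

section Involution

variable {Ω : Type*} [Fintype Ω] {s : Ω → Ω} {g ν : Ω → ℝ} {κ : ℝ}

lemma sum_mul_sub_mul_add_comp (hs : Function.Involutive s) (g ν : Ω → ℝ) :
    ∑ x, g x * (g (s x) - g x) * (ν x + ν (s x)) = -∑ x, (g (s x) - g x) ^ 2 * ν x := by
  have change_var : ∑ x, g x * (g (s x) - g x) * ν (s x)
      = ∑ x, g (s x) * (g x - g (s x)) * ν x := by
    rw [← hs.bijective.sum_comp]
    simp only [hs _]
  simp only [mul_add, sum_add_distrib]
  rw [change_var, ← sum_add_distrib, ← sum_neg_distrib]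
  exact sum_congr rfl fun x _ => by ring

lemma sum_mul_sub_mul_le (hs : Function.Involutive s) (hν : ∀ x, 0 ≤ ν x)
    (hκ : ∀ x, |ν (s x) - ν x| ≤ κ * ν x) :
    ∑ x, g x * (g (s x) - g x) * ν x
      ≤ -(1 / 4) * ∑ x, (g (s x) - g x) ^ 2 * ν x + κ ^ 2 / 4 * ∑ x, g x ^ 2 * ν x := by
  have young (x : Ω) : g x * (g (s x) - g x) * (ν x - ν (s x))
      ≤ (1 / 2) * ((g (s x) - g x) ^ 2 * ν x) + κ ^ 2 / 2 * (g x ^ 2 * ν x) := by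
    set h := g (s x) - g x
    calc g x * h * (ν x - ν (s x)) ≤ |g x| * |h| * |ν (s x) - ν x| := by
          rw [← abs_mul, abs_sub_comm, ← abs_mul]
          exact le_abs_self _
      _ ≤ |g x| * |h| * (κ * ν x) := by gcongr; exact hκ x
      _ = (1 / 2) * (2 * |h| * (κ * |g x|)) * ν x := by ring
      _ ≤ (1 / 2) * (|h| ^ 2 + (κ * |g x|) ^ 2) * ν x := by
          gcongr
          · exact hν x
          · exact two_mul_le_add_sq _ _
      _ = _ := by rw [mul_pow, sq_abs, sq_abs]; ring
  have error_le : ∑ x, g x * (g (s x) - g x) * (ν x - ν (s x))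
      ≤ (1 / 2) * ∑ x, (g (s x) - g x) ^ 2 * ν x + κ ^ 2 / 2 * ∑ x, g x ^ 2 * ν x := by
    rw [mul_sum, mul_sum, ← sum_add_distrib]
    exact sum_le_sum fun x _ => young x
  have average : ∑ x, g x * (g (s x) - g x) * ν x
      = (1 / 2) * (∑ x, g x * (g (s x) - g x) * (ν x + ν (s x))
        + ∑ x, g x * (g (s x) - g x) * (ν x - ν (s x))) := by
    rw [← sum_add_distrib, mul_sum]
    exact sum_congr rfl fun x _ => by ring
  rw [average, sum_mul_sub_mul_add_comp hs]
  linarith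

lemma sum_mul_rate_mul_sub_mul_le (hs : Function.Involutive s) {c : Ω → ℝ}
    (hc : ∀ x, c x ∈ Set.Icc (0 : ℝ) 1) (hν : ∀ x, 0 ≤ ν x)
    (hκ : ∀ x, |ν (s x) - ν x| ≤ κ * ν x) :
    ∑ x, c x * (g x * (g (s x) - g x) * ν x)
      ≤ (1 / 2) * ∑ x, (c (s x) - c x) * (g x ^ 2 * ν x) + κ / 2 * ∑ x, g x ^ 2 * ν x := by
  have drop_square (x : Ω) : c x * (g x * (g (s x) - g x) * ν x)
      ≤ (1 / 2) * (c x * g (s x) ^ 2 * ν x - c x * g x ^ 2 * ν x) := by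
    linarith [mul_nonneg (mul_nonneg (hc x).1 (hν x)) (sq_nonneg (g (s x) - g x))]
  have change_var : ∑ x, c x * g (s x) ^ 2 * ν x = ∑ x, c (s x) * g x ^ 2 * ν (s x) := by
    rw [← hs.bijective.sum_comp]
    simp only [hs _]
  have density_change (x : Ω) : c (s x) * (ν (s x) - ν x) ≤ κ * ν x :=
    calc c (s x) * (ν (s x) - ν x) ≤ c (s x) * |ν (s x) - ν x| :=
          mul_le_mul_of_nonneg_left (le_abs_self _) (hc _).1
      _ ≤ |ν (s x) - ν x| := mul_le_of_le_one_left (abs_nonneg _) (hc _).2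
      _ ≤ κ * ν x := hκ x
  calc ∑ x, c x * (g x * (g (s x) - g x) * ν x)
      ≤ ∑ x, (1 / 2) * (c x * g (s x) ^ 2 * ν x - c x * g x ^ 2 * ν x) :=
        sum_le_sum fun x _ => drop_square x
    _ = ∑ x, (1 / 2) * (c (s x) * g x ^ 2 * ν (s x) - c x * g x ^ 2 * ν x) := by
        rw [← mul_sum, ← mul_sum, sum_sub_distrib, sum_sub_distrib, change_var]
    _ ≤ ∑ x, ((1 / 2) * ((c (s x) - c x) * (g x ^ 2 * ν x)) + κ / 2 * (g x ^ 2 * ν x)) :=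
        sum_le_sum fun x _ => by
          linarith [mul_le_mul_of_nonneg_left (density_change x) (sq_nonneg (g x))]
    _ = _ := by rw [sum_add_distrib, ← mul_sum, ← mul_sum]

end Involution

lemma abs_prod_comp_swap_sub_prod_le {ι α : Type*} [Fintype ι] [DecidableEq ι]
    {w : ι → α → ℝ} {η : ι → α} (hw : ∀ k, 0 ≤ w k (η k)) {a b : ι} (hab : a ≠ b) {κ : ℝ}
    (hκ : |w a (η b) * w b (η a) - w a (η a) * w b (η b)| ≤ κ * (w a (η a) * w b (η b))) :
    |∏ k, w k (η (Equiv.swap a b k)) - ∏ k, w k (η k)| ≤ κ * ∏ k, w k (η k) := by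
  have rest : ∏ k ∈ ({a, b} : Finset ι)ᶜ, w k (η (Equiv.swap a b k))
      = ∏ k ∈ ({a, b} : Finset ι)ᶜ, w k (η k) := by
    refine prod_congr rfl fun k hk => ?_
    simp only [mem_compl, mem_insert, mem_singleton, not_or] at hk
    rw [Equiv.swap_apply_of_ne_of_ne hk.1 hk.2]
  simp only [← prod_mul_prod_compl ({a, b} : Finset ι), prod_pair hab, rest,
    Equiv.swap_apply_left, Equiv.swap_apply_right]
  have rest_nonneg : 0 ≤ ∏ k ∈ ({a, b} : Finset ι)ᶜ, w k (η k) := prod_nonneg fun k _ => hw k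
  rw [← sub_mul, abs_mul, abs_of_nonneg rest_nonneg, ← mul_assoc]
  exact mul_le_mul_of_nonneg_right hκ rest_nonneg

/-- The mass that the Bernoulli law of parameter `u` gives to an occupation variable `b`. It is
real valued, for any real `u`, so that `nuRho` is definitionally a product of such weights. -/
def bernoulliWeight (u : ℝ) (b : Bool) : ℝ := if b then u else 1 - u

lemma le_bernoulliWeight {m u : ℝ} (h₀ : m ≤ u) (h₁ : m ≤ 1 - u) (b : Bool) :
    m ≤ bernoulliWeight u b := by
  cases b
  · exact h₁
  · exact h₀

lemma abs_bernoulliWeight_exchange_le (u v : ℝ) (x y : Bool) :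
    |bernoulliWeight u y * bernoulliWeight v x - bernoulliWeight u x * bernoulliWeight v y|
      ≤ |u - v| := by
  cases x <;> cases y <;> simp only [bernoulliWeight, if_true, Bool.false_eq_true, if_false]
  · simp
  · exact (congrArg abs (by ring)).le
  · rw [abs_sub_comm u]
    exact (congrArg abs (by ring)).le
  · simp

lemma exists_pos_le_bernoulliWeight {X : Type*} [TopologicalSpace X] {S : Set X}
    (hS : IsCompact S) {ρ : X → ℝ} (hρ : ContinuousOn ρ S) (hmem : ∀ x ∈ S, ρ x ∈ Set.Ioo 0 1) :
    ∃ m > 0, ∀ x ∈ S, ∀ b, m ≤ bernoulliWeight (ρ x) b := by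
  obtain ⟨m, hm, hmin⟩ := hS.exists_forall_le' (ContinuousOn.inf hρ (continuousOn_const.sub hρ))
    fun x hx => lt_min (hmem x hx).1 (sub_pos.2 (hmem x hx).2)
  exact ⟨m, hm, fun x hx =>
    le_bernoulliWeight ((hmin x hx).trans (min_le_left _ _)) ((hmin x hx).trans (min_le_right _ _))⟩

section Configurations

variable {N : ℕ} {p σ : ℝ}

lemma swap_eq_comp (i : Fin N) (η : Cfg N) : swap i η = η ∘ Equiv.swap i.castSucc i.succ := by
  funext k
  simp only [swap, Function.comp_apply, Equiv.swap_apply_def, apply_ite η]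

lemma swap_involutive (i : Fin N) : Function.Involutive (swap i) := fun η => by
  funext k
  simp only [swap_eq_comp, Function.comp_apply, Equiv.swap_apply_self]

lemma site_mem_Icc (k : Fin (N + 1)) : (k : ℝ) / N ∈ Set.Icc (0 : ℝ) 1 :=
  ⟨by positivity, div_le_one_of_le₀ (by exact_mod_cast k.is_le) N.cast_nonneg⟩

lemma nuRho_nonneg {ρ : ℝ → ℝ} (hρ : ∀ x ∈ Set.Icc (0 : ℝ) 1, ρ x ∈ Set.Icc (0 : ℝ) 1)
    (η : Cfg N) : 0 ≤ nuRho ρ N η :=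
  prod_nonneg fun k _ =>
    have h := hρ _ (site_mem_Icc k)
    le_bernoulliWeight h.1 (sub_nonneg.2 h.2) (η k)

lemma abs_nuRho_swap_sub_le {ρ : ℝ → ℝ} {L : NNReal} (hρ : LipschitzOnWith L ρ (Set.Icc 0 1))
    {m : ℝ} (hm : 0 < m) (hmρ : ∀ x ∈ Set.Icc (0 : ℝ) 1, ∀ b, m ≤ bernoulliWeight (ρ x) b)
    (i : Fin N) (η : Cfg N) :
    |nuRho ρ N (swap i η) - nuRho ρ N η| ≤ L / m ^ 2 / N * nuRho ρ N η := by
  let w (k : Fin (N + 1)) (b : Bool) : ℝ := bernoulliWeight (ρ ((k : ℝ) / N)) b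
  have hmw (k : Fin (N + 1)) (b : Bool) : m ≤ w k b := hmρ _ (site_mem_Icc k) b
  have lipschitz : |ρ ((i.castSucc : ℝ) / N) - ρ ((i.succ : ℝ) / N)| ≤ L / N := by
    have h := hρ.dist_le_mul _ (site_mem_Icc i.castSucc) _ (site_mem_Icc i.succ)
    have spacing : |(i.castSucc : ℝ) / N - (i.succ : ℝ) / N| = 1 / N := by
      rw [← sub_div, Fin.val_castSucc, Fin.val_succ, Nat.cast_add, Nat.cast_one,
        sub_add_cancel_left, abs_div, abs_neg, abs_one, Nat.abs_cast]
    rwa [Real.dist_eq, Real.dist_eq, spacing, mul_one_div] at h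
  rw [swap_eq_comp]
  refine abs_prod_comp_swap_sub_prod_le (w := w) (fun k => hm.le.trans (hmw k _))
    i.castSucc_lt_succ.ne ?_
  calc _ ≤ |ρ ((i.castSucc : ℝ) / N) - ρ ((i.succ : ℝ) / N)| :=
        abs_bernoulliWeight_exchange_le _ _ _ _
    _ ≤ L / N := lipschitz
    _ = L / m ^ 2 / N * (m * m) := by field_simp
    _ ≤ L / m ^ 2 / N * (w i.castSucc (η i.castSucc) * w i.succ (η i.succ)) :=
        mul_le_mul_of_nonneg_left
          (mul_le_mul (hmw _ _) (hmw _ _) hm.le (hm.le.trans (hmw _ _))) (by positivity)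

lemma cExc_mem_Icc (hp : p ∈ Set.Icc (0 : ℝ) 1) (i : Fin N) (η : Cfg N) :
    cExc p i η ∈ Set.Icc (0 : ℝ) 1 := by
  obtain ⟨hp₀, hp₁⟩ := hp
  cases hx : η i.castSucc <;> cases hy : η i.succ <;> simp [cExc, ind, hx, hy, hp₀, hp₁]

lemma cExc_swap_sub (i : Fin N) (η : Cfg N) :
    cExc p i (swap i η) - cExc p i η
      = (2 * p - 1) * (ind (η i.succ) - ind (η i.castSucc)) := by
  simp only [cExc, swap_eq_comp, Function.comp_apply, Equiv.swap_apply_left,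
    Equiv.swap_apply_right]
  ring

lemma sum_cExc_swap_sub (η : Cfg N) :
    ∑ i, (cExc p i (swap i η) - cExc p i η)
      = (2 * p - 1) * (ind (η (Fin.last N)) - ind (η 0)) := by
  have h₀ := Fin.sum_univ_succ fun k => ind (η k)
  have h₁ := Fin.sum_univ_castSucc fun k => ind (η k)
  simp only [cExc_swap_sub, ← mul_sum, sum_sub_distrib]
  congr 1
  linarith

lemma sum_cExc_swap_sub_le_one (hp : p ∈ Set.Icc (0 : ℝ) 1) (η : Cfg N) :
    ∑ i, (cExc p i (swap i η) - cExc p i η) ≤ 1 := by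
  obtain ⟨hp₀, hp₁⟩ := hp
  rw [sum_cExc_swap_sub]
  cases η (Fin.last N) <;> cases η 0 <;> simp [ind] <;> linarith

lemma sum_mul_Lexc_mul (g ν : Cfg N → ℝ) :
    ∑ η, g η * Lexc p σ g η * ν η
      = ∑ i, (∑ η, cExc p i η * (g η * (g (swap i η) - g η) * ν η)
        + σ / 2 * ∑ η, g η * (g (swap i η) - g η) * ν η) := by
  simp only [Lexc, mul_sum, sum_mul, ← sum_add_distrib]
  rw [sum_comm]
  exact sum_congr rfl fun i _ => sum_congr rfl fun η _ => by ring

lemma sum_mul_Lexc_mul_le (hp : p ∈ Set.Icc (0 : ℝ) 1) (hσ : 0 ≤ σ) {g ν : Cfg N → ℝ} {κ : ℝ}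
    (hν : ∀ η, 0 ≤ ν η) (hκ : ∀ i η, |ν (swap i η) - ν η| ≤ κ * ν η) :
    ∑ η, g η * Lexc p σ g η * ν η
      ≤ -(σ / 8) * ∑ η, ∑ i, (g (swap i η) - g η) ^ 2 * ν η
        + (1 / 2 + N * (κ / 2 + σ * κ ^ 2 / 8)) * ∑ η, g η ^ 2 * ν η := by
  set M := ∑ η, g η ^ 2 * ν η
  let D (i : Fin N) : ℝ := ∑ η, (g (swap i η) - g η) ^ 2 * ν η
  let J (i : Fin N) : ℝ := ∑ η, (cExc p i (swap i η) - cExc p i η) * (g η ^ 2 * ν η)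
  have bond (i : Fin N) : ∑ η, cExc p i η * (g η * (g (swap i η) - g η) * ν η)
        + σ / 2 * ∑ η, g η * (g (swap i η) - g η) * ν η
      ≤ (1 / 2) * J i + κ / 2 * M + σ / 2 * (-(1 / 4) * D i + κ ^ 2 / 4 * M) :=
    add_le_add
      (sum_mul_rate_mul_sub_mul_le (swap_involutive i) (cExc_mem_Icc hp i) hν (hκ i))
      (mul_le_mul_of_nonneg_left (sum_mul_sub_mul_le (swap_involutive i) hν (hκ i)) (by positivity))
  have boundary : ∑ i, J i ≤ M := by
    rw [sum_comm]
    refine sum_le_sum fun η _ => ?_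
    rw [← sum_mul]
    exact mul_le_of_le_one_left (mul_nonneg (sq_nonneg _) (hν η)) (sum_cExc_swap_sub_le_one hp η)
  rw [sum_mul_Lexc_mul, sum_comm (s := univ (α := Cfg N))]
  calc _ ≤ ∑ i, ((1 / 2) * J i + κ / 2 * M + σ / 2 * (-(1 / 4) * D i + κ ^ 2 / 4 * M)) :=
        sum_le_sum fun i _ => bond i
    _ = (1 / 2) * ∑ i, J i - σ / 8 * ∑ i, D i + N * (κ / 2 + σ * κ ^ 2 / 8) * M := by
        simp only [sum_add_distrib, ← mul_sum, sum_const, card_univ, Fintype.card_fin,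
          nsmul_eq_mul]
        ring
    _ ≤ -(σ / 8) * ∑ i, D i + (1 / 2 + N * (κ / 2 + σ * κ ^ 2 / 8)) * M := by linarith

lemma Dexc_nonneg (f : Cfg N → ℝ) {ν : Cfg N → ℝ} (hν : ∀ η, 0 ≤ ν η) : 0 ≤ Dexc N f ν :=
  mul_nonneg (by norm_num) <| sum_nonneg fun η _ => sum_nonneg fun _ _ =>
    mul_nonneg (sq_nonneg _) (hν η)

end Configurations

theorem exclusion_sqrt_dirichlet_bound_general {ρ : ℝ → ℝ} {L : NNReal}
    (hρ : LipschitzOnWith L ρ (Set.Icc 0 1))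
    (hρmem : ∀ x ∈ Set.Icc (0 : ℝ) 1, ρ x ∈ Set.Ioo (0 : ℝ) 1) :
    ∃ C : ℝ, 0 ≤ C ∧ ∀ p ∈ Set.Icc (0 : ℝ) 1, ∀ N : ℕ, 1 ≤ N → ∀ σ : ℝ, 0 ≤ σ →
      ∀ f : Cfg N → ℝ, (∀ η, 0 ≤ f η) →
        (∑ η : Cfg N, f η * nuRho ρ N η) = 1 →
        ∑ η : Cfg N, Real.sqrt (f η) *
            Lexc p σ (fun ζ => Real.sqrt (f ζ)) η * nuRho ρ N η
          ≤ -(σ / 4) * Dexc N f (nuRho ρ N) + C * (1 + σ / N) := by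
  obtain ⟨m, hm, hmρ⟩ := exists_pos_le_bernoulliWeight isCompact_Icc hρ.continuousOn hρmem
  set K : ℝ := L / m ^ 2
  have : 0 ≤ K := by positivity
  refine ⟨1 / 2 + K / 2 + K ^ 2 / 8, by positivity, fun p hp N hN σ hσ f hf hmass => ?_⟩
  have hN₀ : (N : ℝ) ≠ 0 := by exact_mod_cast Nat.one_le_iff_ne_zero.1 hN
  have hg : ∑ η, √(f η) ^ 2 * nuRho ρ N η = 1 := by simpa only [Real.sq_sqrt (hf _)] using hmass
  have bound := sum_mul_Lexc_mul_le hp hσ (g := fun η => √(f η))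
    (nuRho_nonneg fun x hx => Set.Ioo_subset_Icc_self (hρmem x hx))
    (abs_nuRho_swap_sub_le hρ hm hmρ)
  rw [hg, mul_one] at bound
  have error : 1 / 2 + N * (K / N / 2 + σ * (K / N) ^ 2 / 8)
      = 1 / 2 + K / 2 + K ^ 2 / 8 * (σ / N) := by
    field_simp
    ring
  have slack : 0 ≤ K ^ 2 / 8 + (1 / 2 + K / 2) * (σ / N) := by positivity
  rw [error] at bound
  rw [Dexc]
  linarith

/-- there is a constant `C` (depending only on `p` and `ρ`) such
that for all `N ≥ 1`, all `σ ∈ [0,N]` and every probability density `f` with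
respect to `ν_ρ^N`,
`⟨√f, L_exc[√f]⟩_{ν_ρ^N} ≤ −((σ−1)/4) D_exc^N(μ;ν_ρ^N) + C`. -/
theorem exclusion_sqrt_dirichlet_bound (p : ℝ) (hp : p ∈ Set.Ioc (1 / 2 : ℝ) 1)
    (ρ : ℝ → ℝ)
    (hρ : ContDiffOn ℝ 1 ρ (Set.Icc 0 1))
    (hρmem : ∀ x ∈ Set.Icc (0 : ℝ) 1, ρ x ∈ Set.Ioo (0 : ℝ) 1) :
    ∃ C : ℝ, ∀ N : ℕ, 1 ≤ N → ∀ σ : ℝ, 0 ≤ σ → σ ≤ N →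
      ∀ f : Cfg N → ℝ, (∀ η, 0 < f η) →
        (∑ η : Cfg N, f η * nuRho ρ N η) = 1 →
        ∑ η : Cfg N, Real.sqrt (f η) *
            Lexc p σ (fun ζ => Real.sqrt (f ζ)) η * nuRho ρ N η
          ≤ -((σ - 1) / 4) * Dexc N f (nuRho ρ N) + C := by
  obtain ⟨L, hL⟩ := hρ.exists_lipschitzOnWith one_ne_zero (convex_Icc 0 1) isCompact_Icc
  obtain ⟨C, hC, bound⟩ := exclusion_sqrt_dirichlet_bound_general hL hρmem
  refine ⟨2 * C, fun N hN σ hσ hσN f hf hmass =>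
    (bound p ⟨by linarith [hp.1], hp.2⟩ N hN σ hσ f (fun η => (hf η).le) hmass).trans ?_⟩
  have hσN' : σ / N ≤ 1 := div_le_one_of_le₀ hσN N.cast_nonneg
  have hD : 0 ≤ Dexc N f (nuRho ρ N) :=
    Dexc_nonneg f (nuRho_nonneg fun x hx => Set.Ioo_subset_Icc_self (hρmem x hx))
  linarith [mul_le_mul_of_nonneg_left hσN' hC]
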